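/- arXiv:2206.02653 — 2 statements merged into one kernel-verified Lean document; each statement's English description precedes it below -/
import Mathlib

section
/- Let M be a hierarchical MDP with optimal local subpolicies and target states T, umacro(M) its uncertain macro-MDP, and R a suitable region. Then min_{u ∈ R} maxER_{umacro(M)[u]}(◊T) ≤ maxER_M(◊T) ≤ max_{u ∈ R} maxER_{umacro(M)[u]}(◊T). -/
/-! Since `u*` lies in the region, it suffices to show that `umacro(M)[u*]` has the same value as `M`
(if the image of the region is not bounded below, its `sInf` is `0`, and `M` has a nonnegative
value).  Optimality of the local subpolicies replaces `M` by its restriction to the policies `σ`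
that follow the fixed subpolicies inside the partitions, and overriding a policy of `umacro(M)[u*]`
by the subpolicies maps its policies onto these `σ` without changing the chain they induce, because
all actions of a macro state have the same row.  It remains to compare the expected rewards of a
single such `σ` in both models.

Almost sure reachability of the target makes the chain of `σ` transient off the target, so its
expected reward is the unique solution `v` of the linear system `v = r + P v` off the target, `v = 0`
on it (`Transient.exists_solves`, `Transient.expRew_eq`).  Inside a partition, `v` at the entry is
the local reward plus the expectation of `v` at the exit state
(`BlockChain.exit_decomposition`); hence `v`, made constant on each partition, solves the system
of the macro chain (`HMDP.collapse_solves`).  To conclude, the macro chain must be transient as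
well.  The same decomposition, applied to the reward `1`, turns the expected hitting time of `M` into
a Lyapunov function for the macro chain (`Transient.of_lyapunov`).
-/

open scoped BigOperators
open scoped Classical

/-- A (finite) Markov decision process: states `S`, actions `A`, an initial state,
transition probabilities, state rewards, and a set of target states. -/
structure MDP (S A : Type) [Fintype S] [Fintype A] where
  init : S
  P : S → A → S → ℝ
  r : S → ℝ
  target : Set S

namespace MDP

variable {S A : Type} [Fintype S] [Fintype A]

/-- Well-formedness of an MDP: transition probabilities are nonnegative, every
action row sums to `0` or `1`, and rewards are nonnegative. -/
def IsMDP (M : MDP S A) : Prop :=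
  (∀ s a t, 0 ≤ M.P s a t) ∧
  (∀ s a, (∑ t, M.P s a t) = 0 ∨ (∑ t, M.P s a t) = 1) ∧
  (∀ s, 0 ≤ M.r s)

/-- Probability that the Markov chain with kernel `step`, started in `s`,
first visits the set `T` at time `n`. -/
noncomputable def hitAt (step : S → S → ℝ) (T : Set S) : ℕ → S → ℝ
  | 0, s => if s ∈ T then 1 else 0
  | n + 1, s => if s ∈ T then 0 else ∑ t, step s t * hitAt step T n t

/-- Probability of eventually reaching `T` from `s` in the Markov chain `step`. -/
noncomputable def reach (step : S → S → ℝ) (T : Set S) (s : S) : ℝ :=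
  ∑' n, hitAt step T n s

/-- `n`-step truncation of the expected reward accumulated strictly before reaching `T`. -/
noncomputable def erN (step : S → S → ℝ) (rew : S → ℝ) (T : Set S) : ℕ → S → ℝ
  | 0, _ => 0
  | n + 1, s => if s ∈ T then 0 else rew s + ∑ t, step s t * erN step rew T n t

/-- Expected reward accumulated until reaching `T` (supremum of the truncations). -/
noncomputable def expRew (step : S → S → ℝ) (rew : S → ℝ) (T : Set S) (s : S) : ℝ :=
  ⨆ n, erN step rew T n s

/-- The kernel of the Markov chain induced by a memoryless policy `σ`. -/
def stepOf (M : MDP S A) (σ : S → A) : S → S → ℝ := fun s t => M.P s (σ s) t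

/-- A memoryless policy selects an enabled action in every state. -/
def IsPolicy (M : MDP S A) (σ : S → A) : Prop := ∀ s, (∑ t, M.P s (σ s) t) ≠ 0

/-- `Pr_{M[σ]}(s → ◊U)`. -/
noncomputable def PrR (M : MDP S A) (σ : S → A) (U : Set S) (s : S) : ℝ :=
  reach (M.stepOf σ) U s

/-- `ER_{M[σ]}(s → ◊T)` where `T` is the target set of `M`. -/
noncomputable def ER (M : MDP S A) (σ : S → A) (s : S) : ℝ :=
  expRew (M.stepOf σ) M.r M.target s

/-- `maxER_M(s → ◊T)`: the maximal expected reward over memoryless policies. -/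
noncomputable def maxER (M : MDP S A) (s : S) : ℝ :=
  ⨆ σ : { σ : S → A // M.IsPolicy σ }, M.ER σ.1 s

/-- `maxER_M(◊T)` from the initial state. -/
noncomputable def value (M : MDP S A) : ℝ := M.maxER M.init

/-- `M[τ]` for a partial policy `τ : S ⇸ A`: where `τ` is defined, only the chosen
action remains enabled; elsewhere `M` is unchanged. -/
noncomputable def restrict (M : MDP S A) (τ : S → Option A) : MDP S A :=
  { M with
    P := fun s a t =>
      match τ s with
      | some b => if a = b then M.P s a t else 0
      | none => M.P s a t }

end MDP
/-- A hierarchical MDP: an MDP together with (pairwise disjoint, nontrivial)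
partitions `part i`, their entry states, and an enumeration `suc i` of the
(at most `Y`) successor states of each partition.  States outside every
`part i` are the trivial partitions. -/
structure HMDP (S A ι : Type) (Y : ℕ) [Fintype S] [Fintype A] [Fintype ι]
    extends MDP S A where
  part : ι → Finset S
  entry : ι → S
  suc : ι → Fin Y → S

namespace HMDP

variable {S A ι : Type} {Y : ℕ} [Fintype S] [Fintype A] [Fintype ι]

/-- The successor states `succ(S_i) \ S_i` of partition `i`. -/
def succSet (H : HMDP S A ι Y) (i : ι) : Set S :=
  { t | t ∉ H.part i ∧ ∃ s ∈ H.part i, ∃ a, H.P s a t ≠ 0 }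

/-- The hierarchical-MDP conditions: the partitions are pairwise disjoint and
nontrivial; `entry i` belongs to `part i` and is the initial state or has a
predecessor outside `part i`; every other state of `part i` is not the initial
state and has all its predecessors inside `part i`; `suc i` injectively
enumerates (a superset of) the successor states of `part i`, all of them lying
outside `part i`; and target states are trivial states. -/
def IsHMDP (H : HMDP S A ι Y) : Prop :=
  (∀ i j, i ≠ j → Disjoint (H.part i) (H.part j)) ∧
  (∀ i, 2 ≤ (H.part i).card) ∧
  (∀ i, H.entry i ∈ H.part i) ∧
  (∀ i, H.entry i = H.init ∨ ∃ s a, s ∉ H.part i ∧ H.P s a (H.entry i) ≠ 0) ∧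
  (∀ i, ∀ s ∈ H.part i, s ≠ H.entry i →
    s ≠ H.init ∧ ∀ s' a, H.P s' a s ≠ 0 → s' ∈ H.part i) ∧
  (∀ i, Function.Injective (H.suc i) ∧ (∀ j, H.suc i j ∉ H.part i) ∧
    ∀ t ∈ H.succSet i, ∃ j, H.suc i j = t) ∧
  (∀ i, ∀ s ∈ H.part i, s ∉ H.target)

/-- The subMDP `M_i` of partition `i`: its states are the states of `H` plus a
fresh bottom state `none`; inside `part i` the original transitions and rewards
are kept, every state outside `part i` moves with probability 1 to the
(absorbing) bottom state via the fresh action `none` and has reward `0`;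
the target is the bottom state. -/
noncomputable def subMDP (H : HMDP S A ι Y) (i : ι) : MDP (Option S) (Option A) where
  init := some (H.entry i)
  P := fun s a t =>
    match s, a, t with
    | some s, some a, some t => if s ∈ H.part i then H.P s a t else 0
    | some s, none, none => if s ∈ H.part i then 0 else 1
    | none, none, none => 1
    | _, _, _ => 0
  r := fun s =>
    match s with
    | some s => if s ∈ H.part i then H.r s else 0
    | none => 0
  target := {none}

/-- `res_i(j)` for `j < Y`: the probability, under the policy `σs i` of the
subMDP `M_i`, of reaching the `j`-th successor state of partition `i`. -/
noncomputable def resP (H : HMDP S A ι Y) (σs : ι → Option S → Option A)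
    (i : ι) (j : Fin Y) : ℝ :=
  (H.subMDP i).PrR (σs i) {some (H.suc i j)} (some (H.entry i))

/-- `res_i(Y) = maxER_{M_i}(◊{⊥})`. -/
noncomputable def resE (H : HMDP S A ι Y) (i : ι) : ℝ :=
  (H.subMDP i).maxER (some (H.entry i))

/-- The result vector `res_i ∈ ℝ^{Y+1}` of subMDP `M_i` (Def. 7). -/
noncomputable def res (H : HMDP S A ι Y) (σs : ι → Option S → Option A) (i : ι) :
    Fin (Y + 1) → ℝ :=
  fun j => if h : (j : ℕ) < Y then H.resP σs i ⟨j, h⟩ else H.resE i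

/-- The family `σs` consists of (locally) optimal policies of the subMDPs. -/
def LocallyOptimal (H : HMDP S A ι Y) (σs : ι → Option S → Option A) : Prop :=
  ∀ i, (H.subMDP i).IsPolicy (σs i) ∧
    (H.subMDP i).ER (σs i) (some (H.entry i)) = (H.subMDP i).maxER (some (H.entry i))

/-- The partial policy `⊔_𝕀 σ_i` on `H` induced by subMDP policies `σs`. -/
noncomputable def liftPolicy (H : HMDP S A ι Y) (σs : ι → Option S → Option A) :
    S → Option A :=
  fun s => if h : ∃ i, s ∈ H.part i then σs h.choose (some s) else none

/-- `H` has optimal local subpolicies: applying any family of locally optimal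
subMDP policies as a partial policy preserves the maximal expected reward. -/
def HasOptimalLocalSubpolicies (H : HMDP S A ι Y) : Prop :=
  ∀ σs, H.LocallyOptimal σs →
    (H.toMDP.restrict (H.liftPolicy σs)).maxER H.init = H.toMDP.maxER H.init

/-- The macro-MDP of `H` (Def. 6), induced by fixed optimal subMDP policies `σs`:
at states of nontrivial partitions the transition probabilities are the subMDP
reachability probabilities of the successor states and the reward is the
maximal expected subMDP reward; trivial states keep their transitions and
rewards.  (Non-entry states of nontrivial partitions are unreachable.) -/
noncomputable def macroMDP (H : HMDP S A ι Y) (σs : ι → Option S → Option A) :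
    MDP S A where
  init := H.init
  P := fun s a t =>
    if h : ∃ i, s ∈ H.part i then
      ∑ j, if t = H.suc h.choose j then H.resP σs h.choose j else 0
    else H.P s a t
  r := fun s => if h : ∃ i, s ∈ H.part i then H.resE h.choose else H.r s
  target := H.target

end HMDP
/-- The parameters of the uncertain macro-MDP: `p i j` is the transition
probability from `entry i` to the `j`-th successor of partition `i`, and
`q i` is the reward collected in partition `i`. -/
inductive Param (ι : Type) (Y : ℕ) where
  | p : ι → Fin Y → Param ι Y
  | q : ι → Param ι Y

/-- The (rectangular) region `[[lo, hi]]` of parameter valuations. -/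
def region {ι : Type} {Y : ℕ} (lo hi : Param ι Y → ℝ) : Set (Param ι Y → ℝ) :=
  { u | lo ≤ u ∧ u ≤ hi }

/-- The parameter valuation induced by a family of vectors in `ℝ^{Y+1}`
(the first `Y` entries bound the `p`-parameters, the last one the `q`-parameter). -/
def toVal {ι : Type} {Y : ℕ} (b : ι → Fin (Y + 1) → ℝ) : Param ι Y → ℝ
  | .p i j => b i j.castSucc
  | .q i => b i (Fin.last Y)

namespace HMDP

variable {S A ι : Type} {Y : ℕ} [Fintype S] [Fintype A] [Fintype ι]

/-- The instantiation `umacro(M)[u]` of the uncertain macro-MDP of `H` at the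
parameter valuation `u`. -/
noncomputable def umacroInst (H : HMDP S A ι Y) (u : Param ι Y → ℝ) : MDP S A where
  init := H.init
  P := fun s a t =>
    if h : ∃ i, s ∈ H.part i then
      ∑ j, if t = H.suc h.choose j then u (.p h.choose j) else 0
    else H.P s a t
  r := fun s => if h : ∃ i, s ∈ H.part i then u (.q h.choose) else H.r s
  target := H.target

/-- The valuation `u*` with `u*(p_{i,j}) = res_i(j)` and `u*(q_i) = res_i(Y)`. -/
noncomputable def ustar (H : HMDP S A ι Y) (σs : ι → Option S → Option A) :
    Param ι Y → ℝ
  | .p i j => H.resP σs i j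
  | .q i => H.resE i

/-- A set of parameter valuations is suitable if it contains `u*`. -/
def Suitable (H : HMDP S A ι Y) (σs : ι → Option S → Option A)
    (R : Set (Param ι Y → ℝ)) : Prop :=
  H.ustar σs ∈ R

end HMDP

/-! ### Chains that leave the complement of the target -/

section Chain

open Filter Topology

variable {X : Type} [Fintype X]

/-- The expectation of `v (X_n)` restricted to the paths of the chain `step` that avoid `T`
up to and including time `n`. -/
noncomputable def resid (step : X → X → ℝ) (T : Set X) (v : X → ℝ) : ℕ → X → ℝ
  | 0, s => if s ∈ T then 0 else v s
  | n + 1, s => if s ∈ T then 0 else ∑ t, step s t * resid step T v n t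

/-- The mass of the paths avoiding `T` vanishes in the limit, from every state.  This is what
almost sure reachability of `T` amounts to. -/
def Transient (step : X → X → ℝ) (T : Set X) : Prop :=
  ∀ v s, Tendsto (fun n => resid step T v n s) atTop (𝓝 0)

/-- `v` solves the Bellman equations (for a single policy) with reward `g` and target `T`. -/
def Solves (step : X → X → ℝ) (g : X → ℝ) (T : Set X) (v : X → ℝ) : Prop :=
  (∀ s ∈ T, v s = 0) ∧ ∀ s ∉ T, v s = g s + ∑ t, step s t * v t

lemma Solves.erN_add_resid {step : X → X → ℝ} {g : X → ℝ} {T : Set X} {v : X → ℝ}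
    (hv : Solves step g T v) (n : ℕ) (s : X) :
    MDP.erN step g T n s + resid step T v n s = v s := by
  induction n generalizing s with
  | zero =>
    by_cases hs : s ∈ T
    · simp [MDP.erN, resid, hs, hv.1 s hs]
    · simp [MDP.erN, resid, hs]
  | succ n ih =>
    by_cases hs : s ∈ T
    · simp [MDP.erN, resid, hs, hv.1 s hs]
    · simp only [MDP.erN, resid, hs, if_false]
      rw [hv.2 s hs, add_assoc, ← Finset.sum_add_distrib]
      congr 1
      refine Finset.sum_congr rfl fun t _ => ?_
      rw [← mul_add, ih]

lemma erN_nonneg {step : X → X → ℝ} {g : X → ℝ} {T : Set X} (h0 : ∀ s t, 0 ≤ step s t)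
    (hg : ∀ s, 0 ≤ g s) (n : ℕ) (s : X) : 0 ≤ MDP.erN step g T n s := by
  induction n generalizing s with
  | zero => simp [MDP.erN]
  | succ n ih =>
    simp only [MDP.erN]
    split_ifs
    · exact le_rfl
    · exact add_nonneg (hg s) (Finset.sum_nonneg fun t _ => mul_nonneg (h0 s t) (ih t))

lemma resid_nonneg {step : X → X → ℝ} {v : X → ℝ} {T : Set X} (h0 : ∀ s t, 0 ≤ step s t)
    (hv : ∀ s, 0 ≤ v s) (n : ℕ) (s : X) : 0 ≤ resid step T v n s := by
  induction n generalizing s with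
  | zero =>
    simp only [resid]
    split_ifs
    · exact le_rfl
    · exact hv s
  | succ n ih =>
    simp only [resid]
    split_ifs
    · exact le_rfl
    · exact Finset.sum_nonneg fun t _ => mul_nonneg (h0 s t) (ih t)

lemma Transient.tendsto_erN {step : X → X → ℝ} {g : X → ℝ} {T : Set X} {v : X → ℝ}
    (ht : Transient step T) (hv : Solves step g T v) (s : X) :
    Tendsto (fun n => MDP.erN step g T n s) atTop (𝓝 (v s)) := by
  have h : (fun n => MDP.erN step g T n s) = fun n => v s - resid step T v n s := by
    funext n
    linarith [hv.erN_add_resid n s]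
  rw [h]
  simpa using (ht v s).const_sub (v s)

lemma Transient.solution_nonneg {step : X → X → ℝ} {g : X → ℝ} {T : Set X} {v : X → ℝ}
    (ht : Transient step T) (h0 : ∀ s t, 0 ≤ step s t) (hg : ∀ s, 0 ≤ g s)
    (hv : Solves step g T v) (s : X) : 0 ≤ v s :=
  ge_of_tendsto' (ht.tendsto_erN hv s) fun n => erN_nonneg h0 hg n s

lemma Transient.expRew_eq {step : X → X → ℝ} {g : X → ℝ} {T : Set X} {v : X → ℝ}
    (ht : Transient step T) (h0 : ∀ s t, 0 ≤ step s t) (hv0 : ∀ s, 0 ≤ v s)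
    (hv : Solves step g T v) (s : X) : MDP.expRew step g T s = v s := by
  have hle : ∀ n, MDP.erN step g T n s ≤ v s := fun n => by
    linarith [hv.erN_add_resid n s, resid_nonneg (T := T) h0 hv0 n s]
  refine le_antisymm (ciSup_le hle) (le_of_tendsto' (ht.tendsto_erN hv s) fun n => ?_)
  exact le_ciSup (f := fun n => MDP.erN step g T n s) ⟨v s, by rintro _ ⟨m, rfl⟩; exact hle m⟩ n

lemma Transient.eq_zero {step : X → X → ℝ} {T : Set X} {v : X → ℝ}
    (ht : Transient step T) (hv : Solves step 0 T v) : v = 0 := by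
  funext s
  have h1 := ht.tendsto_erN hv s
  have h2 : ∀ n s, MDP.erN step (0 : X → ℝ) T n s = 0 := by
    intro n
    induction n with
    | zero => intro s; simp [MDP.erN]
    | succ n ih => intro s; simp [MDP.erN, ih]
  simp only [h2] at h1
  exact tendsto_nhds_unique h1 tendsto_const_nhds

/-- The Bellman system is square, so uniqueness of its solution gives existence. -/
lemma Transient.exists_solves {step : X → X → ℝ} {T : Set X}
    (ht : Transient step T) (g : X → ℝ) : ∃ v, Solves step g T v := by
  let L : (X → ℝ) →ₗ[ℝ] (X → ℝ) :=
    { toFun := fun v s => v s - if s ∈ T then 0 else ∑ t, step s t * v t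
      map_add' := by
        intro v w
        funext s
        by_cases hs : s ∈ T
        · simp [hs]
        · simp [hs, mul_add, Finset.sum_add_distrib]; ring
      map_smul' := by
        intro c v
        funext s
        by_cases hs : s ∈ T
        · simp [hs]
        · simp [hs, Finset.mul_sum, mul_sub, mul_left_comm] }
  have hL : ∀ v s, L v s = v s - if s ∈ T then 0 else ∑ t, step s t * v t := fun _ _ => rfl
  have hinj : Function.Injective L := by
    rw [← LinearMap.ker_eq_bot, LinearMap.ker_eq_bot']
    intro v hv
    refine ht.eq_zero ⟨fun s hs => ?_, fun s hs => ?_⟩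
    · have := congrFun hv s
      rw [hL] at this
      simpa [hs] using this
    · have := congrFun hv s
      rw [hL] at this
      simp only [hs, if_false, Pi.zero_apply] at this ⊢
      linarith
  obtain ⟨v, hv⟩ := LinearMap.injective_iff_surjective.1 hinj (fun s => if s ∈ T then 0 else g s)
  refine ⟨v, fun s hs => ?_, fun s hs => ?_⟩
  · have := congrFun hv s
    rw [hL] at this
    simpa [hs] using this
  · have := congrFun hv s
    rw [hL] at this
    simp only [hs, if_false] at this
    linarith

lemma exists_bound (v : X → ℝ) : ∃ C, 0 ≤ C ∧ ∀ s, |v s| ≤ C :=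
  ⟨∑ s, |v s|, Finset.sum_nonneg fun _ _ => abs_nonneg _, fun s =>
    Finset.single_le_sum (f := fun s => |v s|) (fun _ _ => abs_nonneg _) (Finset.mem_univ s)⟩

lemma abs_sum_step_le {step : X → X → ℝ} (h0 : ∀ s t, 0 ≤ step s t) {f b : X → ℝ}
    (h : ∀ t, |f t| ≤ b t) (s : X) :
    |∑ t, step s t * f t| ≤ ∑ t, step s t * b t := by
  refine (Finset.abs_sum_le_sum_abs _ _).trans (Finset.sum_le_sum fun t _ => ?_)
  rw [abs_mul, abs_of_nonneg (h0 s t)]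
  exact mul_le_mul_of_nonneg_left (h t) (h0 s t)

/-- A Lyapunov criterion: a nonnegative `h` that drops in expectation by at least `1` per step
outside `T` contracts geometrically, because `h` is bounded. -/
lemma Transient.of_lyapunov {step : X → X → ℝ} {T : Set X} (h0 : ∀ s t, 0 ≤ step s t)
    (h : X → ℝ) (hh : ∀ s, 0 ≤ h s) (hd : ∀ s ∉ T, 1 + ∑ t, step s t * h t ≤ h s) :
    Transient step T := by
  intro v s
  obtain ⟨C, hC, hv⟩ := exists_bound v
  obtain ⟨K', hK', hK'h⟩ := exists_bound h
  set K := K' + 1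
  have hK1 : 1 ≤ K := by simp only [K]; linarith
  have hK : ∀ s, h s ≤ K := fun s => by
    have := (le_abs_self _).trans (hK'h s)
    simp only [K]; linarith
  set c := 1 - 1 / K
  have hc1 : c < 1 := by
    have : 0 < 1 / K := by positivity
    simp only [c]; linarith
  have hc0 : 0 ≤ c := by
    have : 1 / K ≤ 1 := by rw [div_le_one (by linarith)]; exact hK1
    simp only [c]; linarith
  have hcon : ∀ s ∉ T, ∑ t, step s t * h t ≤ c * h s := fun s hs => by
    have h1 := hd s hs
    have h2 : 1 / K * h s ≤ 1 := by
      rw [one_div, inv_mul_le_iff₀ (by linarith)]; simpa using hK s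
    have h3 : c * h s = h s - 1 / K * h s := by simp only [c]; ring
    linarith
  have hb : ∀ n s, |resid step T v n s| ≤ C * c ^ n * h s := by
    intro n
    induction n with
    | zero =>
      intro s
      by_cases hs : s ∈ T
      · simpa [resid, hs] using mul_nonneg hC (hh s)
      · have : 1 ≤ h s := by
          have := hd s hs
          have h' : 0 ≤ ∑ t, step s t * h t :=
            Finset.sum_nonneg fun t _ => mul_nonneg (h0 s t) (hh t)
          linarith
        simp only [resid, hs, if_false, pow_zero, mul_one]
        exact (hv s).trans (le_mul_of_one_le_right hC this)
    | succ n ih =>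
      intro s
      have hcn : 0 ≤ C * c ^ n := by positivity
      by_cases hs : s ∈ T
      · have : 0 ≤ C * c ^ (n + 1) * h s := mul_nonneg (by positivity) (hh s)
        simpa [resid, hs] using this
      · simp only [resid, hs, if_false]
        refine (abs_sum_step_le h0 ih s).trans ?_
        calc ∑ t, step s t * (C * c ^ n * h t) = C * c ^ n * ∑ t, step s t * h t := by
              rw [Finset.mul_sum]
              exact Finset.sum_congr rfl fun t _ => by ring
          _ ≤ C * c ^ n * (c * h s) := mul_le_mul_of_nonneg_left (hcon s hs) hcn
          _ = C * c ^ (n + 1) * h s := by ring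
  refine squeeze_zero_norm (fun n => hb n s) ?_
  simpa using ((tendsto_pow_atTop_nhds_zero_of_lt_one hc0 hc1).const_mul C).mul_const (h s)

/-! ### Reachability probabilities -/

lemma hitAt_nonneg {step : X → X → ℝ} {T : Set X} (h0 : ∀ s t, 0 ≤ step s t) (n : ℕ) (s : X) :
    0 ≤ MDP.hitAt step T n s := by
  induction n generalizing s with
  | zero => simp only [MDP.hitAt]; split_ifs <;> norm_num
  | succ n ih =>
    simp only [MDP.hitAt]
    split_ifs
    · exact le_rfl
    · exact Finset.sum_nonneg fun t _ => mul_nonneg (h0 s t) (ih t)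

lemma reach_nonneg {step : X → X → ℝ} {T : Set X} (h0 : ∀ s t, 0 ≤ step s t) (s : X) :
    0 ≤ MDP.reach step T s :=
  tsum_nonneg fun n => hitAt_nonneg h0 n s

lemma sum_hitAt_succ (step : X → X → ℝ) (T : Set X) (n : ℕ) (s : X) :
    ∑ k ∈ Finset.range (n + 1), MDP.hitAt step T k s =
      if s ∈ T then 1 else ∑ t, step s t * ∑ k ∈ Finset.range n, MDP.hitAt step T k t := by
  rw [Finset.sum_range_succ']
  by_cases hs : s ∈ T
  · simp [MDP.hitAt, hs]
  · simp only [MDP.hitAt, hs, if_false, add_zero, Finset.mul_sum]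
    rw [Finset.sum_comm]

lemma sum_hitAt_le_one {step : X → X → ℝ} {T : Set X} (h0 : ∀ s t, 0 ≤ step s t)
    (h1 : ∀ s, ∑ t, step s t = 1) (n : ℕ) (s : X) :
    ∑ k ∈ Finset.range n, MDP.hitAt step T k s ≤ 1 := by
  induction n generalizing s with
  | zero => simp
  | succ n ih =>
    rw [sum_hitAt_succ]
    split_ifs
    · exact le_rfl
    · rw [← h1 s]
      exact Finset.sum_le_sum fun t _ => mul_le_of_le_one_right (h0 s t) (ih t)

lemma hasSum_hitAt {step : X → X → ℝ} {T : Set X} (h0 : ∀ s t, 0 ≤ step s t)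
    (h1 : ∀ s, ∑ t, step s t = 1) (s : X) :
    HasSum (fun n => MDP.hitAt step T n s) (MDP.reach step T s) :=
  (summable_of_sum_range_le (fun n => hitAt_nonneg h0 n s)
    fun n => sum_hitAt_le_one h0 h1 n s).hasSum

lemma reach_eq {step : X → X → ℝ} {T : Set X} (h0 : ∀ s t, 0 ≤ step s t)
    (h1 : ∀ s, ∑ t, step s t = 1) (s : X) :
    MDP.reach step T s = if s ∈ T then 1 else ∑ t, step s t * MDP.reach step T t := by
  have hl := ((hasSum_hitAt (T := T) h0 h1 s).tendsto_sum_nat).comp (tendsto_add_atTop_nat 1)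
  refine tendsto_nhds_unique hl ?_
  simp only [Function.comp_def, sum_hitAt_succ]
  split_ifs
  · exact tendsto_const_nhds
  · exact tendsto_finsetSum _ fun t _ =>
      (hasSum_hitAt (T := T) h0 h1 t).tendsto_sum_nat.const_mul _

lemma Transient.of_reach {step : X → X → ℝ} {T : Set X} (h0 : ∀ s t, 0 ≤ step s t)
    (h1 : ∀ s, ∑ t, step s t = 1) (hr : ∀ s, MDP.reach step T s = 1) : Transient step T := by
  intro v s
  obtain ⟨C, hC, hv⟩ := exists_bound v
  have hb : ∀ n s, |resid step T v n s| ≤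
      C * (1 - ∑ k ∈ Finset.range n, MDP.hitAt step T k s) := by
    intro n
    induction n with
    | zero =>
      intro s
      by_cases hs : s ∈ T
      · simpa [resid, hs] using hC
      · simpa [resid, hs] using hv s
    | succ n ih =>
      intro s
      rw [sum_hitAt_succ]
      by_cases hs : s ∈ T
      · simp [resid, hs]
      · simp only [resid, hs, if_false]
        refine (abs_sum_step_le h0 ih s).trans (le_of_eq ?_)
        have : (1 : ℝ) = ∑ t, step s t := (h1 s).symm
        conv_rhs => rw [this]
        rw [← Finset.sum_sub_distrib, Finset.mul_sum]
        exact Finset.sum_congr rfl fun t _ => by ring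
  refine squeeze_zero_norm (fun n => hb n s) ?_
  have := (hasSum_hitAt (T := T) h0 h1 s).tendsto_sum_nat
  rw [hr s] at this
  simpa using (this.const_sub 1).const_mul C

lemma reach_eq_zero_of_closed {step : X → X → ℝ} {T Z : Set X} (hZT : ∀ s ∈ Z, s ∉ T)
    (hZ : ∀ s ∈ Z, ∀ t ∉ Z, step s t = 0) {s : X} (hs : s ∈ Z) : MDP.reach step T s = 0 := by
  have : ∀ n, ∀ s ∈ Z, MDP.hitAt step T n s = 0 := by
    intro n
    induction n with
    | zero => intro s hs; simp [MDP.hitAt, hZT s hs]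
    | succ n ih =>
      intro s hs
      simp only [MDP.hitAt, hZT s hs, if_false]
      refine Finset.sum_eq_zero fun t _ => ?_
      by_cases ht : t ∈ Z
      · rw [ih t ht, mul_zero]
      · rw [hZ s hs t ht, zero_mul]
  simp [MDP.reach, this _ s hs]

end Chain

/-! ### First-exit decomposition of a block -/

section Block

variable {S : Type}

/-- `Q` is the chain `step` inside the block `B`, redirected to the absorbing bottom state `none`
one step after it leaves `B`. -/
structure BlockChain (step : S → S → ℝ) (B : Finset S) (Q : Option S → Option S → ℝ) : Prop where
  inner : ∀ s ∈ B, ∀ t, Q (some s) (some t) = step s t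
  inner_none : ∀ s ∈ B, Q (some s) none = 0
  outer : ∀ s ∉ B, ∀ t, Q (some s) (some t) = 0
  outer_none : ∀ s ∉ B, Q (some s) none = 1
  bot : ∀ t, Q none (some t) = 0
  bot_none : Q none none = 1

/-- The reward `g` on the block `B`, extended by `0`. -/
noncomputable def blockRew (B : Finset S) (g : S → ℝ) : Option S → ℝ
  | some s => if s ∈ B then g s else 0
  | none => 0

lemma BlockChain.nonneg {step : S → S → ℝ} {B : Finset S} {Q : Option S → Option S → ℝ}
    (hQ : BlockChain step B Q) (h0 : ∀ s t, 0 ≤ step s t) : ∀ x y, 0 ≤ Q x y := by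
  rintro (_ | s) (_ | t)
  · simp [hQ.bot_none]
  · simp [hQ.bot]
  · by_cases hs : s ∈ B
    · simp [hQ.inner_none s hs]
    · simp [hQ.outer_none s hs]
  · by_cases hs : s ∈ B
    · simpa [hQ.inner s hs] using h0 s t
    · simp [hQ.outer s hs]

variable [Fintype S]

lemma BlockChain.sum_eq_one {step : S → S → ℝ} {B : Finset S} {Q : Option S → Option S → ℝ}
    (hQ : BlockChain step B Q) (h1 : ∀ s, ∑ t, step s t = 1) : ∀ x, ∑ y, Q x y = 1 := by
  rintro (_ | s)
  · simp [Fintype.sum_option, hQ.bot_none, hQ.bot]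
  · by_cases hs : s ∈ B
    · simp [Fintype.sum_option, hQ.inner_none s hs, hQ.inner s hs, h1]
    · simp [Fintype.sum_option, hQ.outer_none s hs, hQ.outer s hs]

/-- Optional stopping at the exit of the block: the value at a block state is the reward collected
inside the block plus the expected value at the exit state.  Both sides satisfy the same equations
in the block, so their difference solves a homogeneous system of the transient chain `Q`. -/
lemma BlockChain.exit_decomposition {step : S → S → ℝ} {B : Finset S}
    {Q : Option S → Option S → ℝ} (hQ : BlockChain step B Q)
    (h0 : ∀ s t, 0 ≤ step s t) (h1 : ∀ s, ∑ t, step s t = 1)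
    (htr : Transient Q {none}) {Y : ℕ} {suc : Fin Y → S} (hinj : Function.Injective suc)
    (hsuc : ∀ j, suc j ∉ B) (hex : ∀ s ∈ B, ∀ t ∉ B, step s t ≠ 0 → ∃ j, suc j = t)
    {g v : S → ℝ} (hv : ∀ s ∈ B, v s = g s + ∑ t, step s t * v t)
    {e : Option S → ℝ} (he : Solves Q (blockRew B g) {none} e) :
    ∀ s ∈ B, v s = e (some s) + ∑ j, MDP.reach Q {some (suc j)} (some s) * v (suc j) := by
  have hQ0 := hQ.nonneg h0
  have hQ1 := hQ.sum_eq_one h1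
  set ρ : Fin Y → Option S → ℝ := fun j x => MDP.reach Q {some (suc j)} x with hρ
  have e_none : e none = 0 := he.1 none rfl
  have e_out : ∀ t ∉ B, e (some t) = 0 := fun t ht => by
    rw [he.2 (some t) (by simp)]
    simp [Fintype.sum_option, blockRew, ht, hQ.outer t ht, e_none]
  have e_in : ∀ s ∈ B, e (some s) = g s + ∑ t, step s t * e (some t) := fun s hs => by
    rw [he.2 (some s) (by simp)]
    simp [Fintype.sum_option, blockRew, hs, hQ.inner s hs, e_none]
  have ρ_in : ∀ j, ∀ s ∈ B, ρ j (some s) = ∑ t, step s t * ρ j (some t) := fun j s hs => by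
    have hne : s ≠ suc j := fun h => hsuc j (h ▸ hs)
    simp only [hρ]
    rw [reach_eq hQ0 hQ1]
    simp [Fintype.sum_option, hne, hQ.inner s hs, hQ.inner_none s hs]
  have ρ_self : ∀ j, ρ j (some (suc j)) = 1 := fun j => by
    simp only [hρ]
    rw [reach_eq hQ0 hQ1]
    simp
  have ρ_out : ∀ j, ∀ t ∉ B, t ≠ suc j → ρ j (some t) = 0 := fun j t ht hne => by
    refine reach_eq_zero_of_closed (Z := {some t, none}) ?_ ?_ (by simp)
    · rintro x (rfl | rfl) <;> simp [hne]
    · rintro x (rfl | rfl) (_ | y) hy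
      · simp at hy
      · exact hQ.outer t ht y
      · simp at hy
      · exact hQ.bot y
  -- On exit states the right-hand side is already `v`.
  have exit_eq : ∀ j, ∑ k, ρ k (some (suc j)) * v (suc k) = v (suc j) := fun j => by
    rw [Finset.sum_eq_single j]
    · rw [ρ_self, one_mul]
    · intro k _ hk
      rw [ρ_out k _ (hsuc j) (fun h => hk (hinj h).symm), zero_mul]
    · simp
  let D : Option S → ℝ := fun x => match x with
    | some s => if s ∈ B then v s - e (some s) - ∑ j, ρ j (some s) * v (suc j) else 0
    | none => 0
  have hD : Solves Q 0 {none} D := by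
    refine ⟨by simp [D], ?_⟩
    rintro (_ | s) hx
    · simp at hx
    by_cases hs : s ∈ B
    · have key : ∀ t, step s t * D (some t) =
          step s t * v t - step s t * e (some t)
            - ∑ j, step s t * ρ j (some t) * v (suc j) := by
        intro t
        have hfac : ∑ j, step s t * ρ j (some t) * v (suc j)
            = step s t * ∑ j, ρ j (some t) * v (suc j) := by
          rw [Finset.mul_sum]; exact Finset.sum_congr rfl fun j _ => by ring
        rw [hfac]
        by_cases ht : t ∈ B
        · simp only [D, ht, if_true]; ring
        · by_cases hst : step s t = 0
          · simp [hst]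
          · obtain ⟨j, rfl⟩ := hex s hs t ht hst
            rw [exit_eq, e_out _ ht]
            simp [D, ht]
      have hsum : ∑ t, ∑ j, step s t * ρ j (some t) * v (suc j)
          = ∑ j, ρ j (some s) * v (suc j) := by
        rw [Finset.sum_comm]
        refine Finset.sum_congr rfl fun j _ => ?_
        rw [ρ_in j s hs, Finset.sum_mul]
      have hDs : D (some s) = v s - e (some s) - ∑ j, ρ j (some s) * v (suc j) := by
        simp [D, hs]
      rw [hDs, Fintype.sum_option, hQ.inner_none s hs]
      simp only [hQ.inner s hs, key, Finset.sum_sub_distrib, hsum]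
      have a := hv s hs
      have b := e_in s hs
      simp only [Pi.zero_apply]
      linarith
    · simp [D, hs, Fintype.sum_option, hQ.outer s hs]
  intro s hs
  have := congrFun (htr.eq_zero hD) (some s)
  simp only [D, hs, if_true, Pi.zero_apply] at this
  linarith

end Block

/-! ### The macro chain -/

namespace MDP

variable {S A : Type} [Fintype S] [Fintype A]

lemma stepOf_nonneg {M : MDP S A} (hM : M.IsMDP) (σ : S → A) (s t : S) : 0 ≤ M.stepOf σ s t :=
  hM.1 s (σ s) t

lemma sum_stepOf {M : MDP S A} (hM : M.IsMDP) {σ : S → A} (hσ : M.IsPolicy σ) (s : S) :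
    ∑ t, M.stepOf σ s t = 1 :=
  (hM.2.1 s (σ s)).resolve_left (hσ s)

lemma maxER_nonneg {M : MDP S A} (hM : M.IsMDP) (s : S) : 0 ≤ M.maxER s :=
  Real.iSup_nonneg fun σ => Real.iSup_nonneg fun n =>
    erN_nonneg (stepOf_nonneg hM σ.1) hM.2.2 n s

end MDP

namespace HMDP

open MDP

variable {S A ι : Type} {Y : ℕ} [Fintype S] [Fintype A] [Fintype ι]

lemma subMDP_policy_mem {H : HMDP S A ι Y} {i : ι} {τ : Option S → Option A}
    (hτ : (H.subMDP i).IsPolicy τ) {s : S} (hs : s ∈ H.part i) :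
    ∃ a, τ (some s) = some a ∧ ∑ t, H.P s a t ≠ 0 := by
  have h := hτ (some s)
  cases ha : τ (some s) with
  | none => simp [ha, Fintype.sum_option, subMDP, hs] at h
  | some a => exact ⟨a, rfl, by simpa [ha, Fintype.sum_option, subMDP, hs] using h⟩

lemma subMDP_policy_notMem {H : HMDP S A ι Y} {i : ι} {τ : Option S → Option A}
    (hτ : (H.subMDP i).IsPolicy τ) {s : S} (hs : s ∉ H.part i) : τ (some s) = none := by
  have h := hτ (some s)
  cases ha : τ (some s) with
  | none => rfl
  | some a => simp [ha, Fintype.sum_option, subMDP, hs] at h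

lemma subMDP_policy_none {H : HMDP S A ι Y} {i : ι} {τ : Option S → Option A}
    (hτ : (H.subMDP i).IsPolicy τ) : τ none = none := by
  have h := hτ none
  cases ha : τ none with
  | none => rfl
  | some a => simp [ha, subMDP] at h

/-- The policy `σ` of `H` follows the subMDP policies `σs` inside the partitions. -/
def Follows (H : HMDP S A ι Y) (σs : ι → Option S → Option A) (σ : S → A) : Prop :=
  ∀ i, ∀ s ∈ H.part i, σs i (some s) = some (σ s)

lemma blockChain {H : HMDP S A ι Y} {σs : ι → Option S → Option A} {σ : S → A} {i : ι}
    (hs : (H.subMDP i).IsPolicy (σs i)) (hf : H.Follows σs σ) :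
    BlockChain (H.stepOf σ) (H.part i) ((H.subMDP i).stepOf (σs i)) where
  inner s h t := by simp [stepOf, subMDP, hf i s h, h]
  inner_none s h := by simp [stepOf, subMDP, hf i s h]
  outer s h t := by simp [stepOf, subMDP, subMDP_policy_notMem hs h]
  outer_none s h := by simp [stepOf, subMDP, subMDP_policy_notMem hs h, h]
  bot t := by simp [stepOf, subMDP, subMDP_policy_none hs]
  bot_none := by simp [stepOf, subMDP, subMDP_policy_none hs]

lemma part_unique {H : HMDP S A ι Y} (hH : H.IsHMDP) {s : S} {i j : ι} (hi : s ∈ H.part i)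
    (hj : s ∈ H.part j) : i = j := by
  by_contra h
  exact Finset.disjoint_left.1 (hH.1 i j h) hi hj

/-- The value function `v`, made constant on each nontrivial partition with the value at the
entry state. -/
noncomputable def collapse (H : HMDP S A ι Y) (v : S → ℝ) : S → ℝ :=
  fun s => if h : ∃ i, s ∈ H.part i then v (H.entry h.choose) else v s

lemma collapse_eq {H : HMDP S A ι Y} {v : S → ℝ} {s : S}
    (hs : ∀ i, s ∈ H.part i → s = H.entry i) : H.collapse v s = v s := by
  unfold collapse
  split_ifs with h
  · exact congrArg v (hs _ h.choose_spec).symm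
  · rfl

lemma eq_entry_of_step {H : HMDP S A ι Y} (hH : H.IsHMDP) {s t : S} {a : A} (h : H.P s a t ≠ 0)
    {k : ι} (hs : s ∉ H.part k) (ht : t ∈ H.part k) : t = H.entry k := by
  by_contra hne
  exact hs ((hH.2.2.2.2.1 k t ht hne).2 s a h)

lemma resP_nonneg {H : HMDP S A ι Y} (hM : H.toMDP.IsMDP) {σs : ι → Option S → Option A}
    {σ : S → A} {i : ι} (hs : (H.subMDP i).IsPolicy (σs i)) (hf : H.Follows σs σ) (j : Fin Y) :
    0 ≤ H.resP σs i j :=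
  reach_nonneg ((blockChain hs hf).nonneg (stepOf_nonneg hM σ)) _

/-- An exit state that is reached with positive probability is a true successor, so if it lies in
another partition then it is the entry of that partition. -/
lemma suc_eq_entry {H : HMDP S A ι Y} (hH : H.IsHMDP) {σs : ι → Option S → Option A}
    {σ : S → A} {i : ι} (hs : (H.subMDP i).IsPolicy (σs i)) (hf : H.Follows σs σ) {j : Fin Y}
    (hj : H.resP σs i j ≠ 0) (k : ι) (hk : H.suc i j ∈ H.part k) : H.suc i j = H.entry k := by
  by_contra hne
  have hQ := blockChain hs hf
  have hnot : H.suc i j ∉ H.part i := (hH.2.2.2.2.2.1 i).2.1 j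
  refine hj (reach_eq_zero_of_closed (Z := {x | x ≠ some (H.suc i j)}) (fun x hx => hx) ?_ ?_)
  · rintro (_ | s) _ t ht
    · obtain rfl : t = some (H.suc i j) := by simpa using ht
      exact hQ.bot _
    · obtain rfl : t = some (H.suc i j) := by simpa using ht
      by_cases hsB : s ∈ H.part i
      · rw [hQ.inner s hsB]
        by_contra h0
        refine hne (eq_entry_of_step hH h0 (fun hsk => hnot ?_) hk)
        exact part_unique hH hsB hsk ▸ hk
      · exact hQ.outer s hsB _
  · intro h
    exact hnot (Option.some.inj h ▸ hH.2.2.1 i)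

lemma sum_macro_row {H : HMDP S A ι Y} (σs : ι → Option S → Option A) (i : ι) (w : S → ℝ) :
    ∑ t, (∑ j, if t = H.suc i j then H.resP σs i j else 0) * w t
      = ∑ j, H.resP σs i j * w (H.suc i j) := by
  simp only [Finset.sum_mul, ite_mul, zero_mul]
  rw [Finset.sum_comm]
  simp

/-- A solution for the chain of `M` induces a solution for the macro chain whose rewards are the
local rewards of the partitions. -/
lemma collapse_solves {H : HMDP S A ι Y} (hM : H.toMDP.IsMDP) (hH : H.IsHMDP)
    {σs : ι → Option S → Option A} {σ : S → A}
    (hs : ∀ i, (H.subMDP i).IsPolicy (σs i)) (hf : H.Follows σs σ) (hσ : H.toMDP.IsPolicy σ)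
    (htr : ∀ i, Transient ((H.subMDP i).stepOf (σs i)) {none})
    {g v : S → ℝ} (hv : Solves (H.stepOf σ) g H.target v) {e : ι → Option S → ℝ}
    (he : ∀ i, Solves ((H.subMDP i).stepOf (σs i)) (blockRew (H.part i) g) {none} (e i)) :
    Solves ((H.umacroInst (H.ustar σs)).stepOf σ)
      (fun s => if h : ∃ i, s ∈ H.part i then e h.choose (some (H.entry h.choose)) else g s)
      H.target (H.collapse v) := by
  refine ⟨fun s hsT => ?_, fun s hsT => ?_⟩
  · rw [collapse_eq fun i hi => absurd hsT (hH.2.2.2.2.2.2 i s hi), hv.1 s hsT]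
  by_cases h : ∃ i, s ∈ H.part i
  · obtain ⟨i, hi⟩ : ∃ i, i = h.choose := ⟨_, rfl⟩
    have hrow : ∀ t, (H.umacroInst (H.ustar σs)).stepOf σ s t
        = ∑ j, if t = H.suc i j then H.resP σs i j else 0 := fun t => by
      simp only [stepOf, umacroInst, h, dif_pos, ustar, hi]
    have hw : H.collapse v s = v (H.entry i) := by simp only [collapse, h, dif_pos, hi]
    simp only [h, dif_pos, hrow, ← hi, hw]
    rw [sum_macro_row]
    obtain ⟨hinj, hsuc, hex⟩ := hH.2.2.2.2.2.1 i
    have hdec := (blockChain (hs i) hf).exit_decomposition (stepOf_nonneg hM σ)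
      (sum_stepOf hM hσ) (htr i) hinj hsuc
      (fun s hs t ht hst => hex t ⟨ht, s, hs, σ s, hst⟩)
      (fun s hs => hv.2 s (hH.2.2.2.2.2.2 i s hs)) (he i) (H.entry i) (hH.2.2.1 i)
    rw [hdec]
    congr 1
    refine Finset.sum_congr rfl fun j _ => ?_
    by_cases hj : H.resP σs i j = 0
    · rw [hj, zero_mul]
      exact mul_eq_zero_of_left hj _
    · rw [collapse_eq (suc_eq_entry hH (hs i) hf hj)]
      rfl
  · have hrow : ∀ t, (H.umacroInst (H.ustar σs)).stepOf σ s t = H.P s (σ s) t := fun t => by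
      simp only [stepOf, umacroInst, h, dif_neg, not_false_eq_true]
    have hw : H.collapse v s = v s := by simp only [collapse, h, dif_neg, not_false_eq_true]
    simp only [h, dif_neg, not_false_eq_true, hrow, hw]
    rw [hv.2 s hsT]
    congr 1
    refine Finset.sum_congr rfl fun t _ => ?_
    by_cases hst : H.P s (σ s) t = 0
    · simp [stepOf, hst]
    · rw [collapse_eq fun k hk => eq_entry_of_step hH hst (fun hk' => h ⟨k, hk'⟩) hk]
      rfl

/-- The exit probabilities of a partition sum to `1`. -/
lemma sum_resP {H : HMDP S A ι Y} (hM : H.toMDP.IsMDP) (hH : H.IsHMDP)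
    {σs : ι → Option S → Option A} {σ : S → A} {i : ι}
    (hs : (H.subMDP i).IsPolicy (σs i)) (hf : H.Follows σs σ) (hσ : H.toMDP.IsPolicy σ)
    (htr : Transient ((H.subMDP i).stepOf (σs i)) {none}) :
    ∑ j, H.resP σs i j = 1 := by
  obtain ⟨hinj, hsuc, hex⟩ := hH.2.2.2.2.2.1 i
  -- The constant function `1` is harmonic, so its exit decomposition has no reward term.
  have hdec := (blockChain hs hf).exit_decomposition (stepOf_nonneg hM σ)
    (sum_stepOf hM hσ) htr hinj hsuc
    (fun s hs t ht hst => hex t ⟨ht, s, hs, σ s, hst⟩) (g := fun _ => 0) (v := fun _ => 1)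
    (fun s _ => by simp [sum_stepOf hM hσ]) (e := fun _ => 0)
    ⟨fun _ _ => rfl, fun x _ => by cases x <;> simp [blockRew]⟩ (H.entry i) (hH.2.2.1 i)
  simp only [mul_one, zero_add] at hdec
  exact hdec.symm

lemma umacro_ER_eq {H : HMDP S A ι Y} (hM : H.toMDP.IsMDP) (hH : H.IsHMDP)
    {σs : ι → Option S → Option A} {σ : S → A} (hs : H.LocallyOptimal σs)
    (hf : H.Follows σs σ) (hσ : H.toMDP.IsPolicy σ)
    (htr : ∀ i, Transient ((H.subMDP i).stepOf (σs i)) {none})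
    (hTr : Transient (H.stepOf σ) H.target) :
    (H.umacroInst (H.ustar σs)).ER σ H.init = H.toMDP.ER σ H.init := by
  have h0 := stepOf_nonneg hM σ
  have hQ0 : ∀ i, ∀ x y, 0 ≤ (H.subMDP i).stepOf (σs i) x y := fun i =>
    (blockChain (hs i).1 hf).nonneg h0
  have hU0 : ∀ s t, 0 ≤ (H.umacroInst (H.ustar σs)).stepOf σ s t := by
    intro s t
    simp only [stepOf, umacroInst]
    split_ifs with h
    · refine Finset.sum_nonneg fun j _ => ?_
      split_ifs
      · exact resP_nonneg hM (hs _).1 hf j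
      · exact le_rfl
    · exact hM.1 _ _ _
  have hrew0 : ∀ (i : ι) (g : S → ℝ), (∀ s, 0 ≤ g s) → ∀ x, 0 ≤ blockRew (H.part i) g x := by
    rintro i g hg (_ | s)
    · exact le_rfl
    · simp only [blockRew]
      split_ifs
      exacts [hg s, le_rfl]
  have hcol0 : ∀ v : S → ℝ, (∀ s, 0 ≤ v s) → ∀ s, 0 ≤ H.collapse v s := by
    intro v hv s
    unfold collapse
    split_ifs
    exacts [hv _, hv _]
  -- With reward `1`, every local reward is at least `1`: the expected time spent in a partition.
  have hUtr : Transient ((H.umacroInst (H.ustar σs)).stepOf σ) H.target := by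
    obtain ⟨v, hv⟩ := hTr.exists_solves fun _ => 1
    choose e he using fun i => (htr i).exists_solves (blockRew (H.part i) fun _ => 1)
    have hcol := collapse_solves hM hH (fun i => (hs i).1) hf hσ htr hv he
    refine Transient.of_lyapunov hU0 (H.collapse v)
      (hcol0 v (hTr.solution_nonneg h0 (fun _ => zero_le_one) hv)) fun s hsT => ?_
    rw [hcol.2 s hsT]
    refine add_le_add ?_ le_rfl
    beta_reduce
    split_ifs with h
    · have hne : some (H.entry h.choose) ∉ ({none} : Set (Option S)) := by simp
      rw [(he h.choose).2 _ hne]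
      have h1 : blockRew (H.part h.choose) (fun _ => 1) (some (H.entry h.choose)) = 1 := by
        simp [blockRew, hH.2.2.1 h.choose]
      rw [h1]
      refine le_add_of_nonneg_right (Finset.sum_nonneg fun y _ => mul_nonneg (hQ0 _ _ _) ?_)
      exact (htr _).solution_nonneg (hQ0 _) (hrew0 _ _ fun _ => zero_le_one) (he _) y
    · exact le_rfl
  obtain ⟨v, hv⟩ := hTr.exists_solves H.r
  have hv0 := hTr.solution_nonneg h0 hM.2.2 hv
  choose e he using fun i => (htr i).exists_solves (blockRew (H.part i) H.r)
  have hcol := collapse_solves hM hH (fun i => (hs i).1) hf hσ htr hv he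
  have hE : ∀ i, H.resE i = e i (some (H.entry i)) := fun i => by
    have hr : (H.subMDP i).r = blockRew (H.part i) H.r := by
      funext x
      cases x <;> rfl
    rw [resE, ← (hs i).2, ER, hr]
    exact (htr i).expRew_eq (hQ0 i)
      ((htr i).solution_nonneg (hQ0 i) (hrew0 i _ hM.2.2) (he i)) (he i) _
  have hr : (H.umacroInst (H.ustar σs)).r =
      fun s => if h : ∃ i, s ∈ H.part i then e h.choose (some (H.entry h.choose)) else H.r s := by
    funext s
    simp only [umacroInst, ustar, hE]
  rw [ER, ER, hr, hTr.expRew_eq h0 hv0 hv]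
  refine (hUtr.expRew_eq hU0 (hcol0 v hv0) hcol _).trans (collapse_eq fun i hi => ?_)
  by_contra hne
  exact (hH.2.2.2.2.1 i _ hi hne).1 rfl

/-! ### Comparing the policies -/

lemma liftPolicy_mem {H : HMDP S A ι Y} (hH : H.IsHMDP) (σs : ι → Option S → Option A) {i : ι}
    {s : S} (hs : s ∈ H.part i) : H.liftPolicy σs s = σs i (some s) := by
  have h : ∃ i, s ∈ H.part i := ⟨i, hs⟩
  simp only [liftPolicy, h, dif_pos]
  rw [part_unique hH h.choose_spec hs]

lemma liftPolicy_notMem {H : HMDP S A ι Y} (σs : ι → Option S → Option A)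
    {s : S} (hs : ¬ ∃ i, s ∈ H.part i) : H.liftPolicy σs s = none := by
  simp only [liftPolicy, hs, dif_neg, not_false_eq_true]

/-- The policies of the restriction are the policies of `M` that follow the local subpolicies. -/
lemma isPolicy_restrict_iff {H : HMDP S A ι Y} (hH : H.IsHMDP) {σs : ι → Option S → Option A}
    (hs : ∀ i, (H.subMDP i).IsPolicy (σs i)) {σ : S → A} :
    (H.toMDP.restrict (H.liftPolicy σs)).IsPolicy σ ↔ H.toMDP.IsPolicy σ ∧ H.Follows σs σ := by
  constructor
  · intro h
    have hf : H.Follows σs σ := by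
      intro i s hsi
      obtain ⟨a, ha, _⟩ := subMDP_policy_mem (hs i) hsi
      have := h s
      by_cases hσa : σ s = a
      · rw [ha, hσa]
      · simp [restrict, liftPolicy_mem hH σs hsi, ha, hσa] at this
    refine ⟨fun s => ?_, hf⟩
    have := h s
    by_cases hsi : ∃ i, s ∈ H.part i
    · obtain ⟨i, hi⟩ := hsi
      simpa [restrict, liftPolicy_mem hH σs hi, hf i s hi] using this
    · simpa [restrict, liftPolicy_notMem σs hsi] using this
  · rintro ⟨h, hf⟩ s
    have := h s
    by_cases hsi : ∃ i, s ∈ H.part i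
    · obtain ⟨i, hi⟩ := hsi
      simpa [restrict, liftPolicy_mem hH σs hi, hf i s hi] using this
    · simpa [restrict, liftPolicy_notMem σs hsi] using this

lemma restrict_ER {H : HMDP S A ι Y} (hH : H.IsHMDP) {σs : ι → Option S → Option A} {σ : S → A}
    (hf : H.Follows σs σ) (s : S) :
    (H.toMDP.restrict (H.liftPolicy σs)).ER σ s = H.toMDP.ER σ s := by
  have : (H.toMDP.restrict (H.liftPolicy σs)).stepOf σ = H.stepOf σ := by
    funext s t
    by_cases hsi : ∃ i, s ∈ H.part i
    · obtain ⟨i, hi⟩ := hsi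
      simp [stepOf, restrict, liftPolicy_mem hH σs hi, hf i s hi]
    · simp [stepOf, restrict, liftPolicy_notMem σs hsi]
  rw [ER, this]
  rfl

/-- The policy `σ`, overridden by the local subpolicies inside the partitions. -/
noncomputable def override (H : HMDP S A ι Y) (σs : ι → Option S → Option A) (σ : S → A) :
    S → A :=
  fun s => (H.liftPolicy σs s).getD (σ s)

lemma follows_override {H : HMDP S A ι Y} (hH : H.IsHMDP) {σs : ι → Option S → Option A}
    (hs : ∀ i, (H.subMDP i).IsPolicy (σs i)) (σ : S → A) :
    H.Follows σs (H.override σs σ) := by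
  intro i s hsi
  obtain ⟨a, ha, _⟩ := subMDP_policy_mem (hs i) hsi
  simp [override, liftPolicy_mem hH σs hsi, ha]

lemma override_eq {H : HMDP S A ι Y} (hH : H.IsHMDP) {σs : ι → Option S → Option A} {σ : S → A}
    (hf : H.Follows σs σ) : H.override σs σ = σ := by
  funext s
  by_cases hsi : ∃ i, s ∈ H.part i
  · obtain ⟨i, hi⟩ := hsi
    simp [override, liftPolicy_mem hH σs hi, hf i s hi]
  · simp [override, liftPolicy_notMem σs hsi]

lemma umacro_stepOf_override (H : HMDP S A ι Y) (σs : ι → Option S → Option A)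
    (u : Param ι Y → ℝ) (σ : S → A) :
    (H.umacroInst u).stepOf (H.override σs σ) = (H.umacroInst u).stepOf σ := by
  funext s t
  by_cases hsi : ∃ i, s ∈ H.part i
  · simp only [stepOf, umacroInst, hsi, dif_pos]
  · simp only [stepOf, umacroInst, hsi, dif_neg, not_false_eq_true, override,
      liftPolicy_notMem σs hsi, Option.getD_none]

lemma isPolicy_override {H : HMDP S A ι Y} (hH : H.IsHMDP) {σs : ι → Option S → Option A}
    (hs : ∀ i, (H.subMDP i).IsPolicy (σs i)) {u : Param ι Y → ℝ} {σ : S → A}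
    (hσ : (H.umacroInst u).IsPolicy σ) : H.toMDP.IsPolicy (H.override σs σ) := by
  intro s
  by_cases hsi : ∃ i, s ∈ H.part i
  · obtain ⟨i, hi⟩ := hsi
    obtain ⟨a, ha, hne⟩ := subMDP_policy_mem (hs i) hi
    simpa [override, liftPolicy_mem hH σs hi, ha] using hne
  · have := hσ s
    simpa only [umacroInst, hsi, dif_neg, not_false_eq_true, override,
      liftPolicy_notMem σs hsi, Option.getD_none] using this

/-- At a macro state, enabledness amounts to the exit probabilities not summing to `0`. -/
lemma umacro_isPolicy {H : HMDP S A ι Y} (hM : H.toMDP.IsMDP) (hH : H.IsHMDP)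
    {σs : ι → Option S → Option A} {σ : S → A}
    (hs : ∀ i, (H.subMDP i).IsPolicy (σs i)) (hf : H.Follows σs σ) (hσ : H.toMDP.IsPolicy σ)
    (htr : ∀ i, Transient ((H.subMDP i).stepOf (σs i)) {none}) :
    (H.umacroInst (H.ustar σs)).IsPolicy σ := by
  intro s
  by_cases hsi : ∃ i, s ∈ H.part i
  · simp only [umacroInst, hsi, dif_pos, ustar]
    have h := sum_macro_row (H := H) σs hsi.choose fun _ => 1
    simp only [mul_one] at h
    rw [h, sum_resP hM hH (hs _) hf hσ (htr _)]
    exact one_ne_zero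
  · simp only [umacroInst, hsi, dif_neg, not_false_eq_true]
    exact hσ s

/-- The macro-MDP at `u*` has the same value as the hierarchical MDP. -/
lemma umacro_ustar_maxER {H : HMDP S A ι Y} (hM : H.toMDP.IsMDP) (hH : H.IsHMDP)
    (hT : ∀ σ, H.toMDP.IsPolicy σ → ∀ s, H.toMDP.PrR σ H.target s = 1)
    (hTsub : ∀ i σ, (H.subMDP i).IsPolicy σ → ∀ s, (H.subMDP i).PrR σ {none} s = 1)
    (hopt : H.HasOptimalLocalSubpolicies) {σs : ι → Option S → Option A}
    (hσs : H.LocallyOptimal σs) :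
    (H.umacroInst (H.ustar σs)).maxER H.init = H.toMDP.maxER H.init := by
  have hs : ∀ i, (H.subMDP i).IsPolicy (σs i) := fun i => (hσs i).1
  have htr : ∀ {σ}, H.toMDP.IsPolicy σ → H.Follows σs σ →
      ∀ i, Transient ((H.subMDP i).stepOf (σs i)) {none} := fun {σ} hσ hf i =>
    have hQ := blockChain (hs i) hf
    Transient.of_reach (hQ.nonneg (stepOf_nonneg hM σ)) (hQ.sum_eq_one (sum_stepOf hM hσ))
      (hTsub i _ (hs i))
  rw [← hopt σs hσs]
  have hov : ∀ {σ}, (H.umacroInst (H.ustar σs)).IsPolicy σ →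
      H.toMDP.IsPolicy (H.override σs σ) ∧ H.Follows σs (H.override σs σ) := fun hσ =>
    ⟨isPolicy_override hH hs hσ, follows_override hH hs _⟩
  refine Function.Surjective.iSup_congr
    (fun σ => ⟨H.override σs σ.1, (isPolicy_restrict_iff hH hs).2 (hov σ.2)⟩) ?_ ?_
  · rintro ⟨σ, hσ⟩
    obtain ⟨hp, hf⟩ := (isPolicy_restrict_iff hH hs).1 hσ
    exact ⟨⟨σ, umacro_isPolicy hM hH hs hf hp (htr hp hf)⟩, Subtype.ext (override_eq hH hf)⟩
  · rintro ⟨σ, hσ⟩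
    obtain ⟨hp, hf⟩ := hov hσ
    dsimp only
    rw [restrict_ER hH hf, ← umacro_ER_eq hM hH hσs hf hp (htr hp hf)
      (Transient.of_reach (stepOf_nonneg hM _) (sum_stepOf hM hp) (hT _ hp)),
      ER, umacro_stepOf_override]
    rfl

end HMDP

/-- **Lemma 2.**  Let `M` be a hierarchical MDP with optimal local subpolicies
and target states `T`, `umacro(M)` its uncertain macro-MDP, and `R = [[lo, hi]]`
a suitable region.  Then
`min_{u ∈ R} maxER_{umacro(M)[u]}(◊T) ≤ maxER_M(◊T) ≤ max_{u ∈ R} maxER_{umacro(M)[u]}(◊T)`. -/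
theorem suitable_region_bounds
    {S A ι : Type} {Y : ℕ} [Fintype S] [Fintype A] [Fintype ι]
    (H : HMDP S A ι Y) (hM : H.toMDP.IsMDP) (hH : H.IsHMDP)
    (hT : ∀ σ, H.toMDP.IsPolicy σ → ∀ s, H.toMDP.PrR σ H.target s = 1)
    (hTsub : ∀ i σ, (H.subMDP i).IsPolicy σ → ∀ s, (H.subMDP i).PrR σ {none} s = 1)
    (hopt : H.HasOptimalLocalSubpolicies)
    (σs : ι → Option S → Option A) (hσs : H.LocallyOptimal σs)
    (lo hi : Param ι Y → ℝ)
    (hsuit : H.Suitable σs (region lo hi))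
    (hbdd : BddAbove ((fun u => (H.umacroInst u).maxER H.init) '' region lo hi)) :
    sInf ((fun u => (H.umacroInst u).maxER H.init) '' region lo hi) ≤
        H.toMDP.maxER H.init ∧
      H.toMDP.maxER H.init ≤
        sSup ((fun u => (H.umacroInst u).maxER H.init) '' region lo hi) := by
  have heq := HMDP.umacro_ustar_maxER hM hH hT hTsub hopt hσs
  have hmem : H.toMDP.maxER H.init ∈
      (fun u => (H.umacroInst u).maxER H.init) '' region lo hi := ⟨H.ustar σs, hsuit, heq⟩
  refine ⟨?_, le_csSup hbdd hmem⟩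
  by_cases hb : BddBelow ((fun u => (H.umacroInst u).maxER H.init) '' region lo hi)
  · exact csInf_le hb hmem
  · rw [Real.sInf_of_not_bddBelow hb]
    exact MDP.maxER_nonneg hM H.init
end

section
/- Let M be a hierarchical MDP such that for each nontrivial partition index i ∈ 𝕀 either (a) the partition has a single successor state, i.e., |succ(S_i) \ S_i| = 1, or (b) there are no choices inside the partition, i.e., |Act(s)| = 1 for all s ∈ S_i. Then M has optimal local subpolicies. -/
/-!
Fix a policy `σ` of `H` with value function `V`, and let `σ'` agree with `σ` on trivial states and
with the given locally optimal policies inside the partitions. It suffices to show that `σ'` is at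
least as good as `σ` from the initial state.

The analytic tool is a maximum principle for a finite chain that reaches `T` almost surely: a
function that is nonpositive on `T` and subharmonic off `T` is nonpositive (`le_zero_of_subharm`).
Applied to homogeneous solutions, it shows that the linear system of expected rewards is uniquely
solvable; its solution bounds the truncations `erN`, so `expRew` is finite and satisfies the Bellman
equation (`expRew_eq`).

If partition `i` has the single successor `t`, then `V s ≤ E s + V t` for `s` in the partition, where
`E` is the value in the subMDP of the policy induced by `σ` (`ER_le_sub`). Replacing `E` by the value
of the locally optimal policy, and keeping `V` everywhere else, gives a function `W` with `V ≤ W`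
at trivial states, at entries, and in partitions without a unique successor. Partitions can be
entered only through their entry, so these inequalities make `W` a subsolution of the Bellman
equation of `σ'`; partitions without choices need no modification, since there `σ` and `σ'`
coincide. The maximum principle gives `W ≤ ER σ'`, and the initial state is trivial or an entry.
-/

open scoped BigOperators
open scoped Classical

/-! ### Finite absorbing chains -/

section Chain

variable {X : Type} [Fintype X]

theorem partial_hit_succ (K : X → X → ℝ) (T : Set X) (n : ℕ) (s : X) :
    ∑ k ∈ Finset.range (n + 1), MDP.hitAt K T k s =
      if s ∈ T then 1 else ∑ t, K s t * ∑ k ∈ Finset.range n, MDP.hitAt K T k t := by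
  rw [Finset.sum_range_succ']
  by_cases h : s ∈ T
  · simp [MDP.hitAt, h]
  · simp only [MDP.hitAt, h, if_false, add_zero]
    rw [Finset.sum_comm]
    simp [Finset.mul_sum]

/-- Maximum principle: the bound `C` of `f` improves, after `n` steps, to `C` times the probability
of not having hit `T` before time `n`, which tends to `0`. -/
theorem le_zero_of_subharm (K : X → X → ℝ) (T : Set X) (h0 : ∀ s t, 0 ≤ K s t)
    (h1 : ∀ s, ∑ t, K s t = 1) (hr : ∀ s, MDP.reach K T s = 1) (f : X → ℝ)
    (hfT : ∀ s ∈ T, f s ≤ 0) (hf : ∀ s, s ∉ T → f s ≤ ∑ t, K s t * f t) (s : X) : f s ≤ 0 := by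
  have hC : ∀ s, f s ≤ ∑ t, |f t| := fun s =>
    (le_abs_self _).trans
      (Finset.single_le_sum (f := fun t => |f t|) (fun t _ => abs_nonneg _) (Finset.mem_univ s))
  set C := ∑ t, |f t| with hCdef
  have key : ∀ n s, f s ≤ C * (1 - ∑ k ∈ Finset.range n, MDP.hitAt K T k s) := by
    intro n
    induction n with
    | zero => intro s; simpa using hC s
    | succ n ih =>
      intro s
      rw [partial_hit_succ]
      by_cases h : s ∈ T
      · simpa [h] using hfT s h
      · simp only [h, if_false]
        calc f s ≤ ∑ t, K s t * f t := hf s h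
          _ ≤ ∑ t, K s t * (C * (1 - ∑ k ∈ Finset.range n, MDP.hitAt K T k t)) :=
            Finset.sum_le_sum fun t _ => mul_le_mul_of_nonneg_left (ih t) (h0 s t)
          _ = C * (∑ t, K s t - ∑ t, K s t * ∑ k ∈ Finset.range n, MDP.hitAt K T k t) := by
            rw [← Finset.sum_sub_distrib, Finset.mul_sum]
            exact Finset.sum_congr rfl fun t _ => by ring
          _ = _ := by rw [h1]
  -- A non-summable series would have the junk sum `0 ≠ 1`.
  have hs : Summable fun n => MDP.hitAt K T n s := by
    by_contra hn
    have := hr s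
    rw [MDP.reach, tsum_eq_zero_of_not_summable hn] at this
    exact zero_ne_one this
  have ht : HasSum (fun n => MDP.hitAt K T n s) 1 := by
    have := hs.hasSum
    rwa [show ∑' n, MDP.hitAt K T n s = 1 from hr s] at this
  have hlim := ((ht.tendsto_sum_nat.const_sub 1).const_mul C)
  simp only [sub_self, mul_zero] at hlim
  exact ge_of_tendsto' hlim fun n => key n s

theorem exists_solution (K : X → X → ℝ) (rew : X → ℝ) (T : Set X) (h0 : ∀ s t, 0 ≤ K s t)
    (h1 : ∀ s, ∑ t, K s t = 1) (hr : ∀ s, MDP.reach K T s = 1) :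
    ∃ v : X → ℝ, ∀ s, v s = if s ∈ T then 0 else rew s + ∑ t, K s t * v t := by
  let L : (X → ℝ) →ₗ[ℝ] (X → ℝ) :=
    { toFun := fun f s => f s - if s ∈ T then 0 else ∑ t, K s t * f t
      map_add' := by
        intro f g
        ext s
        by_cases h : s ∈ T
        · simp [h]
        · simp only [h, if_false, Pi.add_apply, mul_add, Finset.sum_add_distrib]; ring
      map_smul' := by
        intro c f
        ext s
        by_cases h : s ∈ T
        · simp [h]
        · simp only [h, if_false, Pi.smul_apply, smul_eq_mul, RingHom.id_apply, mul_sub,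
            Finset.mul_sum]
          congr 1
          exact Finset.sum_congr rfl fun t _ => by ring }
  have hL : ∀ f s, L f s = f s - if s ∈ T then 0 else ∑ t, K s t * f t := fun f s => rfl
  have hle : ∀ f, L f = 0 → ∀ s, f s ≤ 0 := by
    intro f hf
    have hfs : ∀ s, f s - (if s ∈ T then 0 else ∑ t, K s t * f t) = 0 := fun s => by
      rw [← hL, hf]; rfl
    refine le_zero_of_subharm K T h0 h1 hr f ?_ ?_
    · intro s h
      have := hfs s
      simp only [h, if_true] at this
      linarith
    · intro s h
      have := hfs s
      simp only [h, if_false] at this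
      linarith
  have hinj : Function.Injective L := by
    rw [injective_iff_map_eq_zero]
    intro f hf
    ext s
    have h2 := hle (-f) (by rw [map_neg, hf, neg_zero]) s
    simp only [Pi.neg_apply] at h2
    exact le_antisymm (hle f hf s) (by simpa using h2)
  obtain ⟨v, hv⟩ := (LinearMap.injective_iff_surjective.mp hinj)
    (fun s => if s ∈ T then 0 else rew s)
  refine ⟨v, fun s => ?_⟩
  have := congrFun hv s
  rw [hL] at this
  by_cases h : s ∈ T
  · simp only [h, if_true] at this ⊢
    linarith
  · simp only [h, if_false] at this ⊢
    linarith

/-- The Bellman equation. Almost sure absorption is what keeps the supremum defining `expRew`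
bounded. -/
theorem expRew_eq (K : X → X → ℝ) (rew : X → ℝ) (T : Set X) (h0 : ∀ s t, 0 ≤ K s t)
    (h1 : ∀ s, ∑ t, K s t = 1) (hr : ∀ s, MDP.reach K T s = 1) (hrew : ∀ s, 0 ≤ rew s) (s : X) :
    MDP.expRew K rew T s =
      if s ∈ T then 0 else rew s + ∑ t, K s t * MDP.expRew K rew T t := by
  obtain ⟨v, hv⟩ := exists_solution K rew T h0 h1 hr
  have hv0 : ∀ s, 0 ≤ v s := by
    intro s
    have := le_zero_of_subharm K T h0 h1 hr (fun s => - v s) ?_ ?_ s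
    · simpa using this
    · intro s h
      have := hv s
      simp only [h, if_true] at this
      simp [this]
    · intro s h
      have := hv s
      simp only [h, if_false] at this
      have := hrew s
      simp only [mul_neg, Finset.sum_neg_distrib]
      linarith
  have hb : ∀ n s, MDP.erN K rew T n s ≤ v s := by
    intro n
    induction n with
    | zero => exact hv0
    | succ n ih =>
      intro s
      rw [hv s, MDP.erN]
      split_ifs
      · rfl
      · gcongr with t
        · exact h0 s t
        · exact ih t
  have hmono1 : ∀ n s, MDP.erN K rew T n s ≤ MDP.erN K rew T (n + 1) s := by
    intro n
    induction n with
    | zero =>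
      intro s
      simp only [MDP.erN]
      split_ifs
      · rfl
      · simpa using hrew s
    | succ n ih =>
      intro s
      rw [MDP.erN, MDP.erN]
      split_ifs
      · rfl
      · gcongr with t
        · exact h0 s t
        · exact ih t
  have hlim : ∀ s, Filter.Tendsto (fun n => MDP.erN K rew T n s) Filter.atTop
      (nhds (MDP.expRew K rew T s)) := fun s =>
    tendsto_atTop_ciSup (monotone_nat_of_le_succ fun n => hmono1 n s)
      ⟨v s, by rintro _ ⟨n, rfl⟩; exact hb n s⟩
  refine tendsto_nhds_unique ((Filter.tendsto_add_atTop_iff_nat 1).mpr (hlim s)) ?_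
  simp only [MDP.erN]
  split_ifs
  · exact tendsto_const_nhds
  · exact tendsto_const_nhds.add
      (tendsto_finsetSum _ fun t _ => (hlim t).const_mul (K s t))

end Chain

/-! ### Values in the subMDPs and comparison of policies -/

section Hier

variable {S A ι : Type} {Y : ℕ} [Fintype S] [Fintype A] [Fintype ι]

theorem ER_eq (H : HMDP S A ι Y) (hM : H.toMDP.IsMDP)
    (hT : ∀ σ, H.toMDP.IsPolicy σ → ∀ s, H.toMDP.PrR σ H.target s = 1)
    (σ : S → A) (hσ : H.toMDP.IsPolicy σ) (s : S) :
    H.toMDP.ER σ s =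
      if s ∈ H.target then 0 else H.r s + ∑ t, H.P s (σ s) t * H.toMDP.ER σ t :=
  expRew_eq (H.toMDP.stepOf σ) H.r H.target (fun s t => hM.1 s _ t)
    (fun s => (hM.2.1 s (σ s)).resolve_left (hσ s)) (hT σ hσ) hM.2.2 s

theorem sub_nonneg_P (H : HMDP S A ι Y) (hM : H.toMDP.IsMDP) (i : ι) (s : Option S)
    (a : Option A) (t : Option S) : 0 ≤ (H.subMDP i).P s a t := by
  rcases s with _ | s <;> rcases a with _ | a <;> rcases t with _ | t <;>
    simp only [HMDP.subMDP] <;> (try split_ifs) <;> first | exact hM.1 _ _ _ | norm_num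

theorem sub_row_sum (H : HMDP S A ι Y) (hM : H.toMDP.IsMDP) (i : ι) (s : Option S)
    (a : Option A) (h : (∑ t, (H.subMDP i).P s a t) ≠ 0) : (∑ t, (H.subMDP i).P s a t) = 1 := by
  rw [Fintype.sum_option] at h ⊢
  rcases s with _ | s <;> rcases a with _ | a <;> simp only [HMDP.subMDP] at h ⊢
  · simp
  · simp at h
  · by_cases hs : s ∈ H.part i
    · simp [hs] at h
    · simp [hs]
  · by_cases hs : s ∈ H.part i
    · simp only [hs, if_true, zero_add] at h ⊢
      exact (hM.2.1 s a).resolve_left h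
    · simp [hs] at h

theorem sub_policy_in (H : HMDP S A ι Y) (i : ι) (τ : Option S → Option A)
    (hτ : (H.subMDP i).IsPolicy τ) (s : S) (hs : s ∈ H.part i) :
    ∃ a, τ (some s) = some a ∧ (∑ t, H.P s a t) ≠ 0 := by
  have h := hτ (some s)
  rw [Fintype.sum_option] at h
  rcases ha : τ (some s) with _ | a
  · simp [HMDP.subMDP, ha, hs] at h
  · refine ⟨a, rfl, ?_⟩
    simpa [HMDP.subMDP, ha, hs] using h

theorem sub_ER_eq (H : HMDP S A ι Y) (hM : H.toMDP.IsMDP) (i : ι)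
    (hTsub : ∀ σ, (H.subMDP i).IsPolicy σ → ∀ s, (H.subMDP i).PrR σ {none} s = 1)
    (τ : Option S → Option A) (hτ : (H.subMDP i).IsPolicy τ) (s : Option S) :
    (H.subMDP i).ER τ s = if s = none then 0 else
      (H.subMDP i).r s + ∑ t, (H.subMDP i).P s (τ s) t * (H.subMDP i).ER τ t := by
  have hr : ∀ s, 0 ≤ (H.subMDP i).r s := by
    intro s
    rcases s with _ | s
    · simp [HMDP.subMDP]
    · simp only [HMDP.subMDP]
      split_ifs
      · exact hM.2.2 s
      · rfl
  have key := expRew_eq ((H.subMDP i).stepOf τ) (H.subMDP i).r {none}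
    (fun s t => sub_nonneg_P H hM i s _ t)
    (fun s => sub_row_sum H hM i s _ (hτ s)) (hTsub τ hτ) hr s
  refine Eq.trans key ?_
  by_cases h : s = none
  · rw [if_pos h, if_pos (Set.mem_singleton_iff.mpr h)]
  · rw [if_neg h, if_neg (mt Set.mem_singleton_iff.mp h)]
    rfl

theorem sub_ER_none (H : HMDP S A ι Y) (hM : H.toMDP.IsMDP) (i : ι)
    (hTsub : ∀ σ, (H.subMDP i).IsPolicy σ → ∀ s, (H.subMDP i).PrR σ {none} s = 1)
    (τ : Option S → Option A) (hτ : (H.subMDP i).IsPolicy τ) :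
    (H.subMDP i).ER τ none = 0 := by
  rw [sub_ER_eq H hM i hTsub τ hτ]; simp

theorem sub_ER_out (H : HMDP S A ι Y) (hM : H.toMDP.IsMDP) (i : ι)
    (hTsub : ∀ σ, (H.subMDP i).IsPolicy σ → ∀ s, (H.subMDP i).PrR σ {none} s = 1)
    (τ : Option S → Option A) (hτ : (H.subMDP i).IsPolicy τ) (s : S) (hs : s ∉ H.part i) :
    (H.subMDP i).ER τ (some s) = 0 := by
  rw [sub_ER_eq H hM i hTsub τ hτ, Fintype.sum_option, sub_ER_none H hM i hTsub τ hτ]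
  rcases ha : τ (some s) with _ | a <;> simp [HMDP.subMDP, hs]

theorem sub_ER_in (H : HMDP S A ι Y) (hM : H.toMDP.IsMDP) (i : ι)
    (hTsub : ∀ σ, (H.subMDP i).IsPolicy σ → ∀ s, (H.subMDP i).PrR σ {none} s = 1)
    (τ : Option S → Option A) (hτ : (H.subMDP i).IsPolicy τ) (s : S) (hs : s ∈ H.part i)
    (a : A) (ha : τ (some s) = some a) :
    (H.subMDP i).ER τ (some s) =
      H.r s + ∑ t, H.P s a t * (H.subMDP i).ER τ (some t) := by
  rw [sub_ER_eq H hM i hTsub τ hτ, Fintype.sum_option, ha]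
  simp [HMDP.subMDP, hs]

/-- The policy of the subMDP `M_i` induced by a policy of `H`: it follows `σ` inside partition `i` and
takes the fresh action `none` elsewhere. -/
noncomputable def subPol (H : HMDP S A ι Y) (i : ι) (σ : S → A) : Option S → Option A
  | some s => if s ∈ H.part i then some (σ s) else none
  | none => none

theorem subPol_isPolicy (H : HMDP S A ι Y) (i : ι) (σ : S → A) (hσ : H.toMDP.IsPolicy σ) :
    (H.subMDP i).IsPolicy (subPol H i σ) := by
  intro s
  rw [Fintype.sum_option]
  rcases s with _ | s
  · simp [HMDP.subMDP, subPol]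
  · by_cases hs : s ∈ H.part i
    · simpa [HMDP.subMDP, subPol, hs] using hσ s
    · simp [HMDP.subMDP, subPol, hs]

/-- If `t` is the only state outside partition `i` reachable from it in one step, the value of `σ`
in the partition is at most (in fact equal to) its value inside the subMDP plus its value at `t`. -/
theorem ER_le_sub (H : HMDP S A ι Y) (hM : H.toMDP.IsMDP) (hH : H.IsHMDP)
    (hT : ∀ σ, H.toMDP.IsPolicy σ → ∀ s, H.toMDP.PrR σ H.target s = 1) (i : ι)
    (hTsub : ∀ σ, (H.subMDP i).IsPolicy σ → ∀ s, (H.subMDP i).PrR σ {none} s = 1)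
    (σ : S → A) (hσ : H.toMDP.IsPolicy σ) (t : S)
    (ht : ∀ s ∈ H.part i, ∀ a u, u ∉ H.part i → H.P s a u ≠ 0 → u = t)
    (s : S) (hs : s ∈ H.part i) :
    H.toMDP.ER σ s ≤ (H.subMDP i).ER (subPol H i σ) (some s) + H.toMDP.ER σ t := by
  have hτ := subPol_isPolicy H i σ hσ
  let f : Option S → ℝ := fun x => match x with
    | none => 0
    | some s => if s ∈ H.part i then
        H.toMDP.ER σ s - ((H.subMDP i).ER (subPol H i σ) (some s) + H.toMDP.ER σ t) else 0
  have hf := le_zero_of_subharm ((H.subMDP i).stepOf (subPol H i σ)) {none}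
    (fun s t => sub_nonneg_P H hM i s _ t)
    (fun s => sub_row_sum H hM i s _ (hτ s)) (hTsub _ hτ) f ?_ ?_ (some s)
  · simp only [f, hs, if_true] at hf
    linarith
  · rintro s rfl
    exact le_refl (0 : ℝ)
  · intro s _
    rcases s with _ | s
    · simp at *
    rw [Fintype.sum_option]
    by_cases hs : s ∈ H.part i
    · have h1 : (∑ u, H.P s (σ s) u) = 1 := (hM.2.1 s (σ s)).resolve_left (hσ s)
      have hp : subPol H i σ (some s) = some (σ s) := by simp [subPol, hs]
      have e1 := ER_eq H hM hT σ hσ s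
      rw [if_neg (hH.2.2.2.2.2.2 i s hs)] at e1
      have e2 := sub_ER_in H hM i hTsub _ hτ s hs (σ s) hp
      simp only [MDP.stepOf, hp]
      have e3 : ∀ u, (H.subMDP i).P (some s) (some (σ s)) (some u) * f (some u) =
          H.P s (σ s) u * H.toMDP.ER σ u -
          H.P s (σ s) u * (H.subMDP i).ER (subPol H i σ) (some u)
          - H.P s (σ s) u * H.toMDP.ER σ t := by
        intro u
        by_cases hu : u ∈ H.part i
        · simp only [HMDP.subMDP, hs, if_true, f, hu]; ring
        · by_cases hz : H.P s (σ s) u = 0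
          · simp [HMDP.subMDP, hs, hz]
          · have := ht s hs _ u hu hz
            rw [sub_ER_out H hM i hTsub _ hτ u hu]
            simp only [f, hu, if_false]
            rw [this]; ring
      rw [Finset.sum_congr rfl fun u _ => e3 u, Finset.sum_sub_distrib, Finset.sum_sub_distrib,
        ← Finset.sum_mul, h1]
      have e4 : f (some s) =
        H.toMDP.ER σ s - ((H.subMDP i).ER (subPol H i σ) (some s) + H.toMDP.ER σ t) := by
        simp only [f, hs, if_true]
      have e5 : f none = 0 := rfl
      rw [e4, e5, e1, e2]
      linarith
    · have e : f (some s) = 0 := by simp only [f, hs, if_false]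
      have e5 : f none = 0 := rfl
      rw [e, e5, mul_zero, zero_add]
      refine Finset.sum_nonneg fun u _ => le_of_eq ?_
      simp [MDP.stepOf, subPol, hs, HMDP.subMDP]

theorem lift_eq (H : HMDP S A ι Y) (hH : H.IsHMDP) (σs : ι → Option S → Option A) (i : ι)
    (s : S) (hs : s ∈ H.part i) : H.liftPolicy σs s = σs i (some s) := by
  have h : ∃ i, s ∈ H.part i := ⟨i, hs⟩
  have hc : h.choose = i := by
    by_contra hne
    exact Finset.disjoint_left.mp (hH.1 _ _ hne) h.choose_spec hs
  simp only [HMDP.liftPolicy, h, dif_pos, hc]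

theorem sub_le_maxER (H : HMDP S A ι Y) (i : ι) (τ : Option S → Option A)
    (hτ : (H.subMDP i).IsPolicy τ) (s : Option S) :
    (H.subMDP i).ER τ s ≤ (H.subMDP i).maxER s :=
  le_ciSup (f := fun τ : { τ // (H.subMDP i).IsPolicy τ } => (H.subMDP i).ER τ.1 s)
    (Set.finite_range _).bddAbove ⟨τ, hτ⟩

/-- Replacing `σ` inside the partitions by locally optimal subpolicies does not decrease the
expected reward from the initial state. -/
theorem improve (H : HMDP S A ι Y) (hM : H.toMDP.IsMDP) (hH : H.IsHMDP)
    (hT : ∀ σ, H.toMDP.IsPolicy σ → ∀ s, H.toMDP.PrR σ H.target s = 1)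
    (hTsub : ∀ i σ, (H.subMDP i).IsPolicy σ → ∀ s, (H.subMDP i).PrR σ {none} s = 1)
    (hcrit : ∀ i, (∃! t, t ∈ H.succSet i) ∨
      ∀ s ∈ H.part i, ∃! a : A, (∑ t, H.P s a t) ≠ 0)
    (σs : ι → Option S → Option A) (hσs : H.LocallyOptimal σs)
    (σ : S → A) (hσ : H.toMDP.IsPolicy σ)
    (σ' : S → A) (hσ' : H.toMDP.IsPolicy σ')
    (hin : ∀ i, ∀ s ∈ H.part i, σs i (some s) = some (σ' s))
    (hout : ∀ s, (∀ i, s ∉ H.part i) → σ' s = σ s) :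
    H.toMDP.ER σ H.init ≤ H.toMDP.ER σ' H.init := by
  have huniq : ∀ i j s, s ∈ H.part i → s ∈ H.part j → i = j := by
    intro i j s hi hj
    by_contra hne
    exact Finset.disjoint_left.mp (hH.1 _ _ hne) hi hj
  have hex : ∀ i, ∃ t, (∃! t', t' ∈ H.succSet i) → t ∈ H.succSet i := by
    intro i
    by_cases h : ∃! t', t' ∈ H.succSet i
    · exact ⟨h.choose, fun _ => h.choose_spec.1⟩
    · exact ⟨H.init, fun h' => absurd h' h⟩
  choose t ht using hex
  have ht' : ∀ i, (∃! t', t' ∈ H.succSet i) →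
      ∀ s ∈ H.part i, ∀ a u, u ∉ H.part i → H.P s a u ≠ 0 → u = t i := by
    intro i hi s hs a u hu hz
    exact hi.unique ⟨hu, s, hs, a, hz⟩ (ht i hi)
  set V := H.toMDP.ER σ with hV
  set E := fun i s => (H.subMDP i).ER (σs i) (some s) with hE
  obtain ⟨W, hWa, hWb⟩ : ∃ W : S → ℝ,
      (∀ i, (∃! t', t' ∈ H.succSet i) → ∀ s ∈ H.part i, W s = E i s + V (t i)) ∧
      (∀ s, (∀ i, (∃! t', t' ∈ H.succSet i) → s ∉ H.part i) → W s = V s) := by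
    refine ⟨fun s => if h : ∃ i, (∃! t', t' ∈ H.succSet i) ∧ s ∈ H.part i then
      E h.choose s + V (t h.choose) else V s, ?_, ?_⟩
    · intro i hi s hs
      have h : ∃ i, (∃! t', t' ∈ H.succSet i) ∧ s ∈ H.part i := ⟨i, hi, hs⟩
      have hc : h.choose = i := huniq _ _ s h.choose_spec.2 hs
      simp only [h, dif_pos, hc]
    · intro s hs
      have h : ¬ ∃ i, (∃! t', t' ∈ H.succSet i) ∧ s ∈ H.part i := by
        rintro ⟨i, hi, h⟩
        exact hs i hi h
      simp only [h, dif_neg, not_false_eq_true]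
  have hge : ∀ s, (∀ i, s ∈ H.part i → s = H.entry i) → V s ≤ W s := by
    intro s hs
    by_cases h : ∃ i, (∃! t', t' ∈ H.succSet i) ∧ s ∈ H.part i
    · obtain ⟨i, hi, hsi⟩ := h
      rw [hWa i hi s hsi]
      have h1 := ER_le_sub H hM hH hT i (hTsub i) σ hσ (t i) (ht' i hi) s hsi
      have h2 := sub_le_maxER H i _ (subPol_isPolicy H i σ hσ) (some s)
      have h3 := (hσs i).2
      rw [← hs i hsi] at h3
      simp only [hE]
      rw [h3]
      linarith
    · refine (hWb s fun i hi hsi => h ⟨i, hi, hsi⟩).ge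
  have hstep : ∀ s a u, H.P s a u ≠ 0 → (∀ i, s ∈ H.part i → u ∉ H.part i) → V u ≤ W u := by
    intro s a u hz hsu
    refine hge u fun i hu => ?_
    by_contra hne
    exact hsu i ((hH.2.2.2.2.1 i u hu hne).2 s a hz) hu
  have hVe : ∀ s, V s = if s ∈ H.target then 0 else H.r s + ∑ t, H.P s (σ s) t * V t :=
    ER_eq H hM hT σ hσ
  have hVe' := ER_eq H hM hT σ' hσ'
  have hsub : ∀ s, s ∉ H.target → W s ≤ H.r s + ∑ u, H.P s (σ' s) u * W u := by
    intro s hsT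
    by_cases h : ∃ i, (∃! t', t' ∈ H.succSet i) ∧ s ∈ H.part i
    · obtain ⟨i, hi, hsi⟩ := h
      have h1 : (∑ u, H.P s (σ' s) u) = 1 := (hM.2.1 s (σ' s)).resolve_left (hσ' s)
      have e2 := sub_ER_in H hM i (hTsub i) (σs i) (hσs i).1 s hsi (σ' s) (hin i s hsi)
      rw [hWa i hi s hsi]
      have : ∑ u, H.P s (σ' s) u * (E i u + V (t i)) ≤ ∑ u, H.P s (σ' s) u * W u := by
        refine Finset.sum_le_sum fun u _ => ?_
        by_cases hu : u ∈ H.part i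
        · rw [hWa i hi u hu]
        · by_cases hz : H.P s (σ' s) u = 0
          · simp [hz]
          · refine mul_le_mul_of_nonneg_left ?_ (hM.1 _ _ _)
            have e3 : E i u = 0 := sub_ER_out H hM i (hTsub i) (σs i) (hσs i).1 u hu
            rw [e3, zero_add, ← ht' i hi s hsi _ u hu hz]
            refine hstep s _ u hz fun j hj => ?_
            rwa [huniq j i s hj hsi]
      simp only [mul_add, Finset.sum_add_distrib, ← Finset.sum_mul, h1] at this
      simp only [hE] at this ⊢
      rw [e2]
      linarith
    · have hs : ∀ i, (∃! t', t' ∈ H.succSet i) → s ∉ H.part i := fun i hi hsi => h ⟨i, hi, hsi⟩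
      have hact : σ' s = σ s := by
        by_cases hp : ∃ i, s ∈ H.part i
        · obtain ⟨i, hi⟩ := hp
          exact ((hcrit i).resolve_left fun hu => hs i hu hi) s hi |>.unique (hσ' s) (hσ s)
        · exact hout s fun i hi => hp ⟨i, hi⟩
      rw [hWb s hs, hVe s, if_neg hsT, hact]
      gcongr H.r s + ?_
      refine Finset.sum_le_sum fun u _ => ?_
      by_cases hz : H.P s (σ s) u = 0
      · simp [hz]
      · refine mul_le_mul_of_nonneg_left ?_ (hM.1 _ _ _)
        by_cases hsu : ∃ i, s ∈ H.part i ∧ u ∈ H.part i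
        · obtain ⟨i, hsi, hui⟩ := hsu
          -- `u` lies in the same partition as `s`, where `W` was left unchanged.
          refine (hWb u fun j hj huj => ?_).ge
          rw [huniq j i u huj hui] at hj
          exact hs i hj hsi
        · exact hstep s _ u hz fun i hi hu => hsu ⟨i, hi, hu⟩
  have hWV : W H.init - H.toMDP.ER σ' H.init ≤ 0 := by
    refine le_zero_of_subharm (H.toMDP.stepOf σ') H.target (fun s t => hM.1 s _ t)
      (fun s => (hM.2.1 s (σ' s)).resolve_left (hσ' s)) (hT σ' hσ')
      (fun s => W s - H.toMDP.ER σ' s) ?_ ?_ H.init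
    · intro s hs
      have e1 : W s = V s := hWb s fun i _ hsi => hH.2.2.2.2.2.2 i s hsi hs
      rw [e1, hVe s, hVe' s, if_pos hs, if_pos hs, sub_self]
    · intro s hs
      have e1 := hVe' s
      rw [if_neg hs] at e1
      have e2 := hsub s hs
      simp only [MDP.stepOf, mul_sub, Finset.sum_sub_distrib]
      linarith
  have hinit : V H.init ≤ W H.init := by
    refine hge _ fun i hi => ?_
    by_contra hne
    exact (hH.2.2.2.2.1 i _ hi hne).1 rfl
  linarith

theorem restrict_policy {M : MDP S A} (τ : S → Option A) (σ : S → A)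
    (hσ : (M.restrict τ).IsPolicy σ) : M.IsPolicy σ ∧ (M.restrict τ).stepOf σ = M.stepOf σ := by
  have key : ∀ s t, (M.restrict τ).P s (σ s) t = M.P s (σ s) t := by
    intro s t
    have h := hσ s
    simp only [MDP.restrict] at h ⊢
    generalize τ s = o at h ⊢
    rcases o with _ | b
    · rfl
    · by_cases hb : σ s = b
      · simp [hb]
      · simp [hb] at h
  refine ⟨fun s => ?_, ?_⟩
  · have h := hσ s
    simpa only [key] using h
  · ext s t
    exact key s t

theorem isPolicy_restrict {M : MDP S A} (τ : S → Option A) (σ : S → A)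
    (hσ : M.IsPolicy σ) (h : ∀ s b, τ s = some b → σ s = b) : (M.restrict τ).IsPolicy σ := by
  intro s
  have h1 := hσ s
  simp only [MDP.restrict]
  rcases hb : τ s with _ | b
  · exact h1
  · simpa [h s b hb] using h1

end Hier

/-- **Proposition 1 (sufficient criterion).**  Let `M` be a hierarchical MDP such
that for each nontrivial partition index `i` either (a) the partition has a
single successor state (`|succ(S_i) \ S_i| = 1`), or (b) there are no choices
inside the partition (`|Act(s)| = 1` for all `s ∈ S_i`).  Then `M` has optimal
local subpolicies. -/
theorem sufficient_criterion_optimal_local_subpolicies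
    {S A ι : Type} {Y : ℕ} [Fintype S] [Fintype A] [Fintype ι]
    (H : HMDP S A ι Y) (hM : H.toMDP.IsMDP) (hH : H.IsHMDP)
    (hT : ∀ σ, H.toMDP.IsPolicy σ → ∀ s, H.toMDP.PrR σ H.target s = 1)
    (hTsub : ∀ i σ, (H.subMDP i).IsPolicy σ → ∀ s, (H.subMDP i).PrR σ {none} s = 1)
    (hcrit : ∀ i, (∃! t, t ∈ H.succSet i) ∨
      ∀ s ∈ H.part i, ∃! a : A, (∑ t, H.P s a t) ≠ 0) :
    H.HasOptimalLocalSubpolicies := by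
  intro σs hσs
  have hER : ∀ σ s, (H.toMDP.restrict (H.liftPolicy σs)).IsPolicy σ →
      (H.toMDP.restrict (H.liftPolicy σs)).ER σ s = H.toMDP.ER σ s := by
    intro σ s hσ
    simp only [MDP.ER]
    rw [(restrict_policy _ _ hσ).2]
    rfl
  have himp : ∀ σ, H.toMDP.IsPolicy σ → ∃ σ',
      (H.toMDP.restrict (H.liftPolicy σs)).IsPolicy σ' ∧
      H.toMDP.ER σ H.init ≤ H.toMDP.ER σ' H.init := by
    intro σ hσ
    let σ' : S → A := fun s => (H.liftPolicy σs s).getD (σ s)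
    have hout : ∀ s, (∀ i, s ∉ H.part i) → σ' s = σ s := by
      intro s hs
      simp [σ', HMDP.liftPolicy, hs]
    have hin : ∀ i, ∀ s ∈ H.part i, σs i (some s) = some (σ' s) := by
      intro i s hs
      obtain ⟨a, ha, _⟩ := sub_policy_in H i (σs i) (hσs i).1 s hs
      simp [σ', lift_eq H hH σs i s hs, ha]
    have hσ' : H.toMDP.IsPolicy σ' := by
      intro s
      by_cases h : ∃ i, s ∈ H.part i
      · obtain ⟨i, hs⟩ := h
        obtain ⟨a, ha, hn⟩ := sub_policy_in H i (σs i) (hσs i).1 s hs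
        rw [hin i s hs, Option.some.injEq] at ha
        rwa [ha]
      · rw [hout s fun i hi => h ⟨i, hi⟩]
        exact hσ s
    exact ⟨σ', isPolicy_restrict _ _ hσ' fun s b hb => by simp [σ', hb],
      improve H hM hH hT hTsub hcrit σs hσs σ hσ σ' hσ' hin hout⟩
  rw [MDP.maxER, MDP.maxER]
  by_cases hne : Nonempty { σ : S → A // H.toMDP.IsPolicy σ }
  · obtain ⟨⟨σ₀, hσ₀⟩⟩ := id hne
    obtain ⟨σ₁, hσ₁, _⟩ := himp σ₀ hσ₀
    have : Nonempty { σ : S → A // (H.toMDP.restrict (H.liftPolicy σs)).IsPolicy σ } := ⟨⟨σ₁, hσ₁⟩⟩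
    apply le_antisymm
    · refine ciSup_le fun σ => ?_
      rw [hER _ _ σ.2]
      exact le_ciSup (f := fun σ : { σ // H.toMDP.IsPolicy σ } => H.toMDP.ER σ.1 H.init)
        (Set.finite_range _).bddAbove ⟨σ.1, (restrict_policy _ _ σ.2).1⟩
    · refine ciSup_le fun σ => ?_
      obtain ⟨σ', hσ', hle⟩ := himp σ.1 σ.2
      refine hle.trans ?_
      rw [← hER _ _ hσ']
      exact le_ciSup (f := fun σ : { σ // (H.toMDP.restrict (H.liftPolicy σs)).IsPolicy σ } =>
        (H.toMDP.restrict (H.liftPolicy σs)).ER σ.1 H.init)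
        (Set.finite_range _).bddAbove ⟨σ', hσ'⟩
  · have h1 : IsEmpty { σ : S → A // H.toMDP.IsPolicy σ } := not_nonempty_iff.mp hne
    have h2 : IsEmpty { σ : S → A // (H.toMDP.restrict (H.liftPolicy σs)).IsPolicy σ } :=
      ⟨fun σ => h1.false ⟨σ.1, (restrict_policy _ _ σ.2).1⟩⟩
    -- Without any policy both suprema are over the empty set.
    rw [Real.iSup_of_isEmpty, Real.iSup_of_isEmpty]
end
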